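/- Let 𝓘 ⊆ ℚ[e_1,…,e_n,u] be the ideal generated by: (1) e_i(e_i − u) for all i; (2) ∏_{i∈S⁺} e_i · ∏_{j∈S⁻} (e_j − u) for all disjoint S⁺, S⁻ ⊆ {1,…,n} with ⋂_{i∈S⁺} H_i⁺ ∩ ⋂_{j∈S⁻} H_j⁻ = ∅; (3) the polynomial q_{S⁺,S⁻} satisfying u·q_{S⁺,S⁻} = ∏_{i∈S⁺} e_i · ∏_{j∈S⁻} (e_j − u) − ∏_{i∈S⁺} (e_i − u) · ∏_{j∈S⁻} e_j, for all disjoint S⁺, S⁻ with ⋂_{i∈S⁺} H_i⁺ ∩ ⋂_{j∈S⁻} H_j⁻ = ∅ and ⋂_{i∈S⁺∪S⁻} H_i ≠ ∅. Then (a) the evaluation u ↦ 0 induces a ℚ-algebra isomorphism ℚ[e_1,…,e_n,u]/(𝓘 + ⟨u⟩) ≅ B(𝒜), and (b) the evaluation u ↦ 1 induces a ℚ-algebra isomorphism ℚ[e_1,…,e_n,u]/(𝓘 + ⟨u − 1⟩) ≅ H⁰(M_1(𝒜)), where the generator e_i maps to the Heaviside function x_i. -/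

import Mathlib

/-!
Both specializations have the same shape. For a surjection `ψ` out of `ℚ[e]`, the map
`p ↦ ψ (p(r))` has kernel `𝓘 + ⟨u - r⟩` as soon as `ψ` kills the image of `𝓘` under `u ↦ r` and
every element of `ker ψ` lies in `𝓘 + ⟨u - r⟩` (`exists_equiv_of_eval`).

For `u = 0`, the image of `𝓘` has to be `𝓘₀`. The polynomial `q_{S⁺,S⁻}` specializes to minus the
relation (3) of `𝓘₀`, its constant term being the derivative of `u q` at `0`
(`eval_zero_of_X_mul_eq`). Family (2) of `𝓘` gives `∏_{S⁺∪S⁻} e`: if the hyperplanes do not meet,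
this is a generator of `𝓘₀`, and otherwise it is, modulo squares, plus or minus `e k` times the
relation (3) (`prod_mem_of_bRel_mem`). Conversely, if `⋂_{i∈S} H i = ∅`, some combination
`∑ c i ω i` is the constant `-1`, and the signs of the `c i` split `S` into `S⁺, S⁻` with an empty
intersection of half-spaces (`exists_signs_of_iInter_eq_empty`).

For `u = 1`, the generators vanish on `M₁(𝒜)`; for family (3) this uses that reflection in a common
point of the hyperplanes exchanges opposite cones (`opposite_inter_eq_empty`). The polynomials
`∏_{i∈T} e i ∏_{j∉T} (1 - e j)` sum to `1`, and modulo `e i (e i - 1)` multiplication of one of them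
by `p` is multiplication by the value of `p` at the vertex `T` of the cube
(`mul_signIdem_sub_mem`). If the region of `T` is empty, the idempotent lies in the ideal; if it is
nonempty, the vertex value of `p` is the value of its image on that region. This gives injectivity,
and, since locally constant functions are constant on the convex regions, surjectivity.
-/

/-!
Statement 13: the two specializations `u ↦ 0` and `u ↦ 1` of the ideal `𝓘` in
`ℚ[e₁,…,eₙ,u]` (realized as `Polynomial (MvPolynomial (Fin n) ℚ)`, with
`e i = Polynomial.C (MvPolynomial.X i)` and `u = Polynomial.X`) recover `B(𝒜)` and
`H⁰(M₁(𝒜))` respectively.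
-/

open MvPolynomial Set

variable {V : Type*} [NormedAddCommGroup V] [NormedSpace ℝ V] [FiniteDimensional ℝ V]
variable {n : ℕ}

/-- The complement `M₁(𝒜)` of the arrangement given by the affine forms `ω i`. -/
def M₁ (ω : Fin n → V →ᵃ[ℝ] ℝ) : Set V := {v | ∀ i, ω i v ≠ 0}

/-- The hyperplane `H i`. -/
def Hyp (ω : Fin n → V →ᵃ[ℝ] ℝ) (i : Fin n) : Set V := {v | ω i v = 0}

/-- The open positive half-space `H i⁺`. -/
def Hplus (ω : Fin n → V →ᵃ[ℝ] ℝ) (i : Fin n) : Set V := {v | 0 < ω i v}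

/-- The open negative half-space `H i⁻`. -/
def Hminus (ω : Fin n → V →ᵃ[ℝ] ℝ) (i : Fin n) : Set V := {v | ω i v < 0}

/-- The Heaviside function `x i`: the locally constant function on `M₁(𝒜)` which is
`1` on `H i⁺` and `0` on `H i⁻`. -/
noncomputable def heaviside (ω : Fin n → V →ᵃ[ℝ] ℝ) (i : Fin n) :
    LocallyConstant (M₁ ω) ℚ where
  toFun v := if 0 < ω i v.1 then 1 else 0
  isLocallyConstant := by
    rw [IsLocallyConstant.iff_exists_open]
    rintro ⟨v, hv⟩
    rcases lt_or_gt_of_ne (hv i) with h | h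
    · refine ⟨{w : M₁ ω | ω i w.1 < 0}, ?_, h, fun w hw => ?_⟩
      · exact (isOpen_lt ((ω i).continuous_of_finiteDimensional.comp
          continuous_subtype_val) continuous_const)
      · simp only [Set.mem_setOf_eq] at hw
        simp [not_lt.mpr hw.le, not_lt.mpr h.le]
    · refine ⟨{w : M₁ ω | 0 < ω i w.1}, ?_, h, fun w hw => ?_⟩
      · exact (isOpen_lt continuous_const ((ω i).continuous_of_finiteDimensional.comp
          continuous_subtype_val))
      · simp only [Set.mem_setOf_eq] at hw
        simp [hw, h]

/-- Family (1) of the Cordovil ideal: `e i ^ 2`. -/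
def bFam1 (ι : Type*) : Set (MvPolynomial ι ℚ) := {p | ∃ i : ι, p = X i ^ 2}

/-- Family (2): `∏_{i∈S} e i` whenever `⋂_{i∈S} Z i = ∅`. -/
def bFam2 {ι W : Type*} (Z : ι → Set W) : Set (MvPolynomial ι ℚ) :=
  {p | ∃ S : Finset ι, (⋂ i ∈ S, Z i) = ∅ ∧ p = ∏ i ∈ S, X i}

/-- Family (3): `Σ_{k∈S⁻} (∏_{i∈S⁺} e i · ∏_{j∈S⁻, j≠k} e j) -
Σ_{k∈S⁺} (∏_{i∈S⁺, i≠k} e i · ∏_{j∈S⁻} e j)` for disjoint `S⁺, S⁻` with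
`⋂_{i∈S⁺} Z⁺ i ∩ ⋂_{j∈S⁻} Z⁻ j = ∅` and `⋂_{i∈S⁺∪S⁻} Z i ≠ ∅`. -/
def bFam3 {ι W : Type*} [DecidableEq ι] (Z Zp Zm : ι → Set W) :
    Set (MvPolynomial ι ℚ) :=
  {p | ∃ Sp Sm : Finset ι, Disjoint Sp Sm ∧
    (⋂ i ∈ Sp, Zp i) ∩ (⋂ j ∈ Sm, Zm j) = ∅ ∧
    (⋂ i ∈ (Sp ∪ Sm : Finset ι), Z i) ≠ ∅ ∧
    p = (∑ k ∈ Sm, ((∏ i ∈ Sp, X i) * ∏ j ∈ Sm.erase k, X j)) -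
      ∑ k ∈ Sp, ((∏ i ∈ Sp.erase k, X i) * ∏ j ∈ Sm, X j)}

/-- The ideal `𝓘₀` defining the algebra `B(𝒜)`; the arrangement is recorded through its
hyperplanes `Z i` and open half-spaces `Zp i`, `Zm i`. -/
noncomputable def bIdeal {ι W : Type*} [DecidableEq ι] (Z Zp Zm : ι → Set W) :
    Ideal (MvPolynomial ι ℚ) :=
  Ideal.span (bFam1 ι ∪ bFam2 Z ∪ bFam3 Z Zp Zm)

/-- The algebra `B(𝒜) = ℚ[e_H : H ∈ 𝒜] / 𝓘₀`. -/
abbrev BAlg {ι W : Type*} [DecidableEq ι] (Z Zp Zm : ι → Set W) :=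
  MvPolynomial ι ℚ ⧸ bIdeal Z Zp Zm

/-- The degree-`k` graded component of `B(𝒜)` (grading by total degree in the
generators): the image of the homogeneous polynomials of degree `k`. -/
noncomputable def bGrade {ι W : Type*} [DecidableEq ι] (Z Zp Zm : ι → Set W) (k : ℕ) :
    Submodule ℚ (BAlg Z Zp Zm) :=
  Submodule.map (Ideal.Quotient.mkₐ ℚ (bIdeal Z Zp Zm)).toLinearMap
    (MvPolynomial.homogeneousSubmodule ι ℚ k)

/-- Family (1) of `𝓘`: `e i (e i - u)`. -/
def tFam1 (n : ℕ) : Set (Polynomial (MvPolynomial (Fin n) ℚ)) :=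
  {p | ∃ i : Fin n, p = Polynomial.C (X i) * (Polynomial.C (X i) - Polynomial.X)}

/-- Family (2) of `𝓘`: `∏_{i∈S⁺} e i · ∏_{j∈S⁻} (e j - u)` for disjoint `S⁺, S⁻` with
`⋂_{i∈S⁺} H i⁺ ∩ ⋂_{j∈S⁻} H j⁻ = ∅`. -/
def tFam2 (ω : Fin n → V →ᵃ[ℝ] ℝ) : Set (Polynomial (MvPolynomial (Fin n) ℚ)) :=
  {p | ∃ Sp Sm : Finset (Fin n), Disjoint Sp Sm ∧
    (⋂ i ∈ Sp, Hplus ω i) ∩ (⋂ j ∈ Sm, Hminus ω j) = ∅ ∧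
    p = (∏ i ∈ Sp, Polynomial.C (X i)) * ∏ j ∈ Sm, (Polynomial.C (X j) - Polynomial.X)}

/-- Family (3) of `𝓘`: the polynomials `q` with
`u·q = ∏_{i∈S⁺} e i ∏_{j∈S⁻} (e j - u) - ∏_{i∈S⁺} (e i - u) ∏_{j∈S⁻} e j`, for disjoint
`S⁺, S⁻` with `⋂_{i∈S⁺} H i⁺ ∩ ⋂_{j∈S⁻} H j⁻ = ∅` and `⋂_{i∈S⁺∪S⁻} H i ≠ ∅`. -/
def tFam3 (ω : Fin n → V →ᵃ[ℝ] ℝ) : Set (Polynomial (MvPolynomial (Fin n) ℚ)) :=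
  {q | ∃ Sp Sm : Finset (Fin n), Disjoint Sp Sm ∧
    (⋂ i ∈ Sp, Hplus ω i) ∩ (⋂ j ∈ Sm, Hminus ω j) = ∅ ∧
    (⋂ i ∈ (Sp ∪ Sm : Finset (Fin n)), Hyp ω i) ≠ ∅ ∧
    Polynomial.X * q =
      (∏ i ∈ Sp, Polynomial.C (X i)) * (∏ j ∈ Sm, (Polynomial.C (X j) - Polynomial.X)) -
        (∏ i ∈ Sp, (Polynomial.C (X i) - Polynomial.X)) * ∏ j ∈ Sm, Polynomial.C (X j)}

/-- The ideal `𝓘 ⊆ ℚ[e₁,…,eₙ,u]`. -/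
noncomputable def tIdeal (ω : Fin n → V →ᵃ[ℝ] ℝ) :
    Ideal (Polynomial (MvPolynomial (Fin n) ℚ)) :=
  Ideal.span (tFam1 n ∪ tFam2 ω ∪ tFam3 ω)

/-! ### Quotients by an ideal together with a specialization of `u` -/

lemma C_eval_mem {R : Type*} [CommRing R] {I : Ideal (Polynomial R)} {r : R} {p : Polynomial R}
    (hp : p ∈ I ⊔ Ideal.span {Polynomial.X - Polynomial.C r}) :
    Polynomial.C (p.eval r) ∈ I ⊔ Ideal.span {Polynomial.X - Polynomial.C r} := by
  have h : p - Polynomial.C (p.eval r) ∈ I ⊔ Ideal.span {Polynomial.X - Polynomial.C r} :=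
    Ideal.mem_sup_right (Ideal.mem_span_singleton.2 Polynomial.X_sub_C_dvd_sub_C_eval)
  simpa using sub_mem hp h

/-- If `ψ` is onto, kills the specialization of `I` at `u = r`, and has no further kernel, then
`p ↦ ψ (p(r))` identifies the quotient by `I + ⟨u - r⟩` with the target of `ψ`. -/
lemma exists_equiv_of_eval {R A : Type*} [CommRing R] [Algebra ℚ R] [CommRing A] [Algebra ℚ A]
    (ψ : R →ₐ[ℚ] A) (hψ : Function.Surjective ψ) (I : Ideal (Polynomial R)) (r : R)
    (u : Polynomial R) (hu : u = Polynomial.X - Polynomial.C r)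
    (hI : ∀ p ∈ I, ψ (p.eval r) = 0)
    (hker : ∀ b, ψ b = 0 → Polynomial.C b ∈ I ⊔ Ideal.span {Polynomial.X - Polynomial.C r}) :
    ∃ f : (Polynomial R ⧸ (I ⊔ Ideal.span {u})) ≃ₐ[ℚ] A,
      ∀ p : Polynomial R, f (Ideal.Quotient.mk _ p) = ψ (p.eval r) := by
  subst hu
  let φ : Polynomial R →ₐ[ℚ] A := ψ.comp ((Polynomial.aeval (R := R) r).restrictScalars ℚ)
  have hφ : ∀ p, φ p = ψ (p.eval r) := fun p => by
    simp [φ]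
  have hsurj : Function.Surjective φ := fun a => by
    obtain ⟨b, rfl⟩ := hψ a
    exact ⟨Polynomial.C b, by simp [hφ]⟩
  have hk : I ⊔ Ideal.span {Polynomial.X - Polynomial.C r} = RingHom.ker φ := by
    apply le_antisymm
    · refine sup_le (fun p hp => ?_) ?_
      · rw [RingHom.mem_ker, hφ, hI p hp]
      · rw [Ideal.span_singleton_le_iff_mem, RingHom.mem_ker, hφ]
        simp
    · intro p hp
      rw [RingHom.mem_ker, hφ] at hp
      have h : p - Polynomial.C (p.eval r) ∈ I ⊔ Ideal.span {Polynomial.X - Polynomial.C r} :=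
        Ideal.mem_sup_right (Ideal.mem_span_singleton.2 Polynomial.X_sub_C_dvd_sub_C_eval)
      simpa using add_mem h (hker _ hp)
  refine ⟨(Ideal.quotientEquivAlgOfEq ℚ hk).trans
    (Ideal.quotientKerAlgEquivOfSurjective hsurj), fun p => ?_⟩
  rw [← hφ]
  rfl

/-! ### The specialization `u = 0` -/

/-- The relation of family (3) of `𝓘₀` attached to a pair `S⁺, S⁻`. -/
noncomputable def bRel (Sp Sm : Finset (Fin n)) : MvPolynomial (Fin n) ℚ :=
  (∑ k ∈ Sm, ((∏ i ∈ Sp, X i) * ∏ j ∈ Sm.erase k, X j)) -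
    ∑ k ∈ Sp, ((∏ i ∈ Sp.erase k, X i) * ∏ j ∈ Sm, X j)

/-- The right-hand side `u · q_{S⁺,S⁻}` of family (3) of `𝓘`. -/
noncomputable def tDiff (Sp Sm : Finset (Fin n)) : Polynomial (MvPolynomial (Fin n) ℚ) :=
  (∏ i ∈ Sp, Polynomial.C (X i)) * (∏ j ∈ Sm, (Polynomial.C (X j) - Polynomial.X)) -
    (∏ i ∈ Sp, (Polynomial.C (X i) - Polynomial.X)) * ∏ j ∈ Sm, Polynomial.C (X j)

/-- The constant term of `q` is the derivative of `u · q` at `u = 0`. -/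
lemma eval_zero_of_X_mul_eq {Sp Sm : Finset (Fin n)} {q : Polynomial (MvPolynomial (Fin n) ℚ)}
    (hq : Polynomial.X * q = tDiff Sp Sm) : q.eval 0 = - bRel Sp Sm := by
  have h := congrArg (fun p => (Polynomial.derivative p).eval 0) hq
  simp only [tDiff, Polynomial.derivative_mul, Polynomial.derivative_X, Polynomial.derivative_sub,
    Polynomial.derivative_prod_finset, Polynomial.derivative_C, Polynomial.eval_add,
    Polynomial.eval_mul, Polynomial.eval_sub, Polynomial.eval_finsetSum, Polynomial.eval_prod,
    Polynomial.eval_X, Polynomial.eval_C, Polynomial.eval_one, Polynomial.eval_neg, sub_zero,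
    mul_zero, zero_mul, Finset.sum_const_zero, zero_add, add_zero, one_mul, zero_sub, mul_neg,
    mul_one, Finset.sum_neg_distrib, neg_mul] at h
  rw [h, bRel, Finset.mul_sum, Finset.sum_mul]
  ring

lemma exists_X_mul_eq (Sp Sm : Finset (Fin n)) :
    ∃ q, Polynomial.X * q = tDiff Sp Sm := by
  have h : Polynomial.X ∣ tDiff Sp Sm := by
    rw [Polynomial.X_dvd_iff, Polynomial.coeff_zero_eq_eval_zero]
    simp [tDiff, Polynomial.eval_prod]
  obtain ⟨q, hq⟩ := h
  exact ⟨q, hq.symm⟩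

/-- Multiplying the relation of `S⁺, S⁻` by some `e k` with `k ∈ S⁺ ∪ S⁻` leaves, modulo squares,
only the full product `∏_{S⁺ ∪ S⁻} e`. -/
lemma prod_mem_of_bRel_mem {J : Ideal (MvPolynomial (Fin n) ℚ)} (hsq : ∀ i, X i ^ 2 ∈ J)
    {Sp Sm : Finset (Fin n)} (hne : (Sp ∪ Sm).Nonempty) (h : bRel Sp Sm ∈ J) :
    (∏ i ∈ Sp, X i) * ∏ j ∈ Sm, X j ∈ J := by
  have key : ∀ (k : Fin n) (S : Finset (Fin n)), k ∈ S →
      (X k : MvPolynomial (Fin n) ℚ) * ∏ i ∈ S, X i ∈ J := by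
    intro k S hk
    rw [← Finset.mul_prod_erase S _ hk, ← mul_assoc, ← pow_two]
    exact J.mul_mem_right _ (hsq k)
  -- the terms of the sum other than the one indexed by `k` retain the factor `e k`
  have key2 : ∀ (k : Fin n) (S : Finset (Fin n)), k ∈ S →
      (X k : MvPolynomial (Fin n) ℚ) * (∑ l ∈ S, ∏ i ∈ S.erase l, X i) - ∏ i ∈ S, X i ∈ J := by
    intro k S hk
    rw [← Finset.add_sum_erase S _ hk, mul_add, Finset.mul_prod_erase S _ hk, add_sub_cancel_left,
      Finset.mul_sum]
    refine sum_mem fun l hl => key _ _ ?_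
    rw [Finset.mem_erase] at hl ⊢
    exact ⟨hl.1.symm, hk⟩
  rw [bRel, ← Finset.mul_sum, ← Finset.sum_mul] at h
  obtain ⟨k, hk⟩ := hne
  rcases Finset.mem_union.1 hk with hk | hk
  · have h1 := J.mul_mem_left (X k) h
    have h2 := J.mul_mem_right (∑ l ∈ Sm, ∏ i ∈ Sm.erase l, X i) (key k Sp hk)
    have h3 := J.mul_mem_right (∏ j ∈ Sm, X j) (key2 k Sp hk)
    have := sub_mem (sub_mem h2 h1) h3
    convert this using 1
    ring
  · have h1 := J.mul_mem_left (X k) h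
    have h2 := J.mul_mem_left (∑ l ∈ Sp, ∏ i ∈ Sp.erase l, X i) (key k Sm hk)
    have h3 := J.mul_mem_left (∏ j ∈ Sp, X j) (key2 k Sm hk)
    have := sub_mem (add_mem h1 h2) h3
    convert this using 1
    ring

/-- A family of affine forms without a common zero has a linear combination equal to the
constant `-1`; the signs of its coefficients give an empty intersection of open half-spaces. -/
lemma exists_signs_of_iInter_eq_empty (ω : Fin n → V →ᵃ[ℝ] ℝ) (S : Finset (Fin n))
    (hS : (⋂ i ∈ S, Hyp ω i) = ∅) :
    ∃ Sp Sm : Finset (Fin n), Disjoint Sp Sm ∧ Sp ∪ Sm = S ∧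
      (⋂ i ∈ Sp, Hplus ω i) ∩ (⋂ j ∈ Sm, Hminus ω j) = ∅ := by
  classical
  let L : V →ₗ[ℝ] (S → ℝ) := LinearMap.pi fun i => (ω i).linear
  let b : S → ℝ := fun i => ω i 0
  have hω : ∀ (i : Fin n) (v : V), ω i v = (ω i).linear v + ω i 0 := fun i v => by
    conv_lhs => rw [(ω i).decomp]
    simp
  have hb : b ∉ LinearMap.range L := by
    rintro ⟨v, hv⟩
    have : -v ∈ ⋂ i ∈ S, Hyp ω i := by
      simp only [mem_iInter]
      intro i hi
      have h := congrFun hv ⟨i, hi⟩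
      change (ω i).linear v = ω i 0 at h
      change ω i (-v) = 0
      rw [hω, map_neg, h]
      ring
    rw [hS] at this
    exact this
  obtain ⟨f, hf, hfL⟩ := Submodule.exists_le_ker_of_notMem hb
  -- `c` are the coefficients of `f`, rescaled so that `∑ c i ω i = -1`
  let c : S → ℝ := fun i => -(f b)⁻¹ * f (Pi.single i 1)
  have hfsum : ∀ x : S → ℝ, f x = ∑ i, x i * f (Pi.single i 1) := fun x => by
    rw [LinearMap.pi_apply_eq_sum_univ f x]
    simp only [smul_eq_mul]
    refine Finset.sum_congr rfl fun i _ => ?_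
    congr 2
    ext j
    simp [Pi.single_apply, eq_comm]
  have hc : ∀ v : V, ∑ i : S, c i * ω i v = -1 := fun v => by
    have h1 : f (L v + b) = f b := by
      have : f (L v) = 0 := hfL ⟨v, rfl⟩
      rw [map_add, this, zero_add]
    have h2 : (fun i : S => ω i v) = L v + b := by
      ext i
      exact hω i v
    rw [← h2, hfsum] at h1
    have h3 : ∑ i : S, c i * ω i v = -(f b)⁻¹ * ∑ i : S, ω i v * f (Pi.single i 1) := by
      rw [Finset.mul_sum]
      refine Finset.sum_congr rfl fun i _ => ?_
      simp only [c]
      ring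
    rw [h3, h1]
    field_simp
  let P : Fin n → Prop := fun i => ∃ h : i ∈ S, 0 ≤ c ⟨i, h⟩
  refine ⟨S.filter P, S.filter fun i => ¬ P i, Finset.disjoint_filter_filter_not _ _ _,
    Finset.filter_union_filter_not_eq _ _, ?_⟩
  rw [eq_empty_iff_forall_notMem]
  rintro v ⟨hp, hm⟩
  simp only [mem_iInter, Finset.mem_filter] at hp hm
  have : 0 ≤ ∑ i : S, c i * ω i v := by
    refine Finset.sum_nonneg fun i _ => ?_
    by_cases h : 0 ≤ c i
    · exact mul_nonneg h (le_of_lt (hp i ⟨i.2, i.2, h⟩))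
    · have hn : ω i v < 0 := hm i ⟨i.2, fun ⟨_, h'⟩ => h h'⟩
      exact mul_nonneg_of_nonpos_of_nonpos (not_le.1 h).le hn.le
  rw [hc] at this
  linarith

lemma union_nonempty_of_inter_eq_empty {ω : Fin n → V →ᵃ[ℝ] ℝ} {Sp Sm : Finset (Fin n)}
    (h : (⋂ i ∈ Sp, Hplus ω i) ∩ (⋂ j ∈ Sm, Hminus ω j) = ∅) : (Sp ∪ Sm).Nonempty := by
  by_contra hne
  rw [Finset.not_nonempty_iff_eq_empty, Finset.union_eq_empty] at hne
  obtain ⟨rfl, rfl⟩ := hne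
  simp at h

lemma eval_zero_mem_bIdeal (ω : Fin n → V →ᵃ[ℝ] ℝ) {p : Polynomial (MvPolynomial (Fin n) ℚ)}
    (hp : p ∈ tIdeal ω) : p.eval 0 ∈ bIdeal (Hyp ω) (Hplus ω) (Hminus ω) := by
  have hle : tIdeal ω ≤ (bIdeal (Hyp ω) (Hplus ω) (Hminus ω)).comap (Polynomial.evalRingHom 0) := by
    refine Ideal.span_le.2 ?_
    rintro p ((⟨i, rfl⟩ | ⟨Sp, Sm, hd, he, rfl⟩) | ⟨Sp, Sm, hd, he, hne, hq⟩)
    · refine Ideal.subset_span (Or.inl (Or.inl ⟨i, ?_⟩))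
      simp [pow_two]
    · have hev : Polynomial.evalRingHom 0 ((∏ i ∈ Sp, Polynomial.C (X i)) *
          ∏ j ∈ Sm, (Polynomial.C (X j) - Polynomial.X)) =
          ((∏ i ∈ Sp, X i) * ∏ j ∈ Sm, X j : MvPolynomial (Fin n) ℚ) := by
        simp [Polynomial.eval_prod]
      rw [SetLike.mem_coe, Ideal.mem_comap, hev]
      by_cases hZ : (⋂ i ∈ Sp ∪ Sm, Hyp ω i) = ∅
      · refine Ideal.subset_span (Or.inl (Or.inr ⟨Sp ∪ Sm, hZ, ?_⟩))
        rw [Finset.prod_union hd]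
      · exact prod_mem_of_bRel_mem (fun i => Ideal.subset_span (Or.inl (Or.inl ⟨i, rfl⟩)))
          (union_nonempty_of_inter_eq_empty he)
          (Ideal.subset_span (Or.inr ⟨Sp, Sm, hd, he, hZ, rfl⟩))
    · rw [SetLike.mem_coe, Ideal.mem_comap, Polynomial.coe_evalRingHom, eval_zero_of_X_mul_eq hq]
      exact neg_mem (Ideal.subset_span (Or.inr ⟨Sp, Sm, hd, he, hne, rfl⟩))
  exact hle hp

lemma C_mem_of_mem_bIdeal (ω : Fin n → V →ᵃ[ℝ] ℝ) {b : MvPolynomial (Fin n) ℚ}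
    (hb : b ∈ bIdeal (Hyp ω) (Hplus ω) (Hminus ω)) :
    Polynomial.C b ∈ tIdeal ω ⊔ Ideal.span {Polynomial.X - Polynomial.C 0} := by
  have hmem : ∀ p ∈ tFam1 n ∪ tFam2 ω ∪ tFam3 ω,
      Polynomial.C (p.eval 0) ∈ tIdeal ω ⊔ Ideal.span {Polynomial.X - Polynomial.C 0} :=
    fun p hp => C_eval_mem (Ideal.mem_sup_left (Ideal.subset_span hp))
  have hle : bIdeal (Hyp ω) (Hplus ω) (Hminus ω) ≤
      (tIdeal ω ⊔ Ideal.span {Polynomial.X - Polynomial.C 0}).comap Polynomial.C := by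
    refine Ideal.span_le.2 ?_
    rintro p ((⟨i, rfl⟩ | ⟨S, hS, rfl⟩) | ⟨Sp, Sm, hd, he, hne, rfl⟩)
    · have := hmem _ (Or.inl (Or.inl ⟨i, rfl⟩))
      rw [SetLike.mem_coe, Ideal.mem_comap]
      convert this using 2
      simp [pow_two]
    · obtain ⟨Sp, Sm, hd, rfl, he⟩ := exists_signs_of_iInter_eq_empty ω S hS
      have := hmem _ (Or.inl (Or.inr ⟨Sp, Sm, hd, he, rfl⟩))
      rw [SetLike.mem_coe, Ideal.mem_comap]
      convert this using 2
      simp [Polynomial.eval_prod, Finset.prod_union hd]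
    · obtain ⟨q, hq⟩ := exists_X_mul_eq Sp Sm
      have := hmem _ (Or.inr ⟨Sp, Sm, hd, he, hne, hq⟩)
      rw [eval_zero_of_X_mul_eq hq, map_neg, neg_mem_iff] at this
      exact this
  exact hle hb

/-! ### The specialization `u = 1` -/

/-- The set of indices `i` with `v ∈ H i⁺`. -/
noncomputable def posSet (ω : Fin n → V →ᵃ[ℝ] ℝ) (v : V) : Finset (Fin n) :=
  Finset.univ.filter fun i => 0 < ω i v

/-- The idempotent `∏_{i∈T} e i · ∏_{j∉T} (1 - e j)`, which specializes to the indicator of the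
region with sign vector `T`. -/
noncomputable def signIdem (T : Finset (Fin n)) : MvPolynomial (Fin n) ℚ :=
  (∏ i ∈ T, X i) * ∏ j ∈ Finset.univ \ T, (1 - X j)

/-- The value of `p` at the vertex of the cube `{0,1}ⁿ` given by `T`. -/
noncomputable def vertexEval (T : Finset (Fin n)) : MvPolynomial (Fin n) ℚ →+* ℚ :=
  MvPolynomial.eval fun i => if i ∈ T then 1 else 0

lemma sum_signIdem : ∑ T : Finset (Fin n), signIdem T = 1 := by
  have h := Finset.prod_add (fun i : Fin n => (X i : MvPolynomial (Fin n) ℚ))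
    (fun i => 1 - X i) Finset.univ
  simpa [signIdem] using h.symm

lemma vertexEval_signIdem (T T' : Finset (Fin n)) :
    vertexEval T (signIdem T') = if T = T' then 1 else 0 := by
  split_ifs with h
  · subst h
    simp only [vertexEval, signIdem, map_mul, map_prod, eval_X, map_sub, map_one]
    rw [Finset.prod_eq_one, Finset.prod_eq_one, one_mul]
    · intro i hi
      simp [(Finset.mem_sdiff.1 hi).2]
    · intro i hi
      simp [hi]
  · simp only [vertexEval, signIdem, map_mul, map_prod, eval_X, map_sub, map_one, mul_eq_zero,
      Finset.prod_eq_zero_iff]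
    by_contra hcon
    push Not at hcon
    apply h
    ext i
    by_cases hi : i ∈ T' <;> by_cases hi' : i ∈ T <;> simp [hi, hi']
    · simpa [hi'] using hcon.1 i hi
    · simpa [hi'] using hcon.2 i (by simp [hi])

/-- Modulo the relations `e i (e i - 1)`, multiplication by the idempotent of `T` is evaluation at
the vertex `T`. -/
lemma mul_signIdem_sub_mem {J : Ideal (MvPolynomial (Fin n) ℚ)}
    (hJ : ∀ i, X i * (X i - 1) ∈ J) (T : Finset (Fin n)) (p : MvPolynomial (Fin n) ℚ) :
    p * signIdem T - C (vertexEval T p) * signIdem T ∈ J := by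
  induction p using MvPolynomial.induction_on with
  | C a => simp [vertexEval]
  | add p q hp hq =>
    convert add_mem hp hq using 1
    simp only [map_add]
    ring
  | mul_X p i hp =>
    have hi : (X i - C (vertexEval T (X i))) * signIdem T ∈ J := by
      by_cases h : i ∈ T
      · have : signIdem T = X i * ((∏ i ∈ T.erase i, X i) * ∏ j ∈ Finset.univ \ T, (1 - X j)) := by
          rw [signIdem, ← Finset.mul_prod_erase T _ h, mul_assoc]
        rw [this]
        convert J.mul_mem_right
          ((∏ i ∈ T.erase i, X i) * ∏ j ∈ Finset.univ \ T, (1 - X j)) (hJ i) using 1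
        simp only [vertexEval, eval_X, h, if_true, map_one]
        ring
      · have h' : i ∈ Finset.univ \ T := by simp [h]
        have : signIdem T =
            (1 - X i) * ((∏ i ∈ T, X i) * ∏ j ∈ (Finset.univ \ T).erase i, (1 - X j)) := by
          rw [signIdem, ← Finset.mul_prod_erase _ _ h']
          ring
        rw [this]
        convert neg_mem (J.mul_mem_right
          ((∏ i ∈ T, X i) * ∏ j ∈ (Finset.univ \ T).erase i, (1 - X j)) (hJ i)) using 1
        simp only [vertexEval, eval_X, h, if_false, map_zero]
        ring
    convert add_mem (J.mul_mem_left (X i) hp) (J.mul_mem_left (C (vertexEval T p)) hi) using 1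
    simp only [map_mul]
    ring

lemma aeval_heaviside_apply (ω : Fin n → V →ᵃ[ℝ] ℝ) (p : MvPolynomial (Fin n) ℚ) (v : M₁ ω) :
    MvPolynomial.aeval (heaviside ω) p v = vertexEval (posSet ω v) p := by
  induction p using MvPolynomial.induction_on with
  | C a => simp [vertexEval, ← MvPolynomial.algebraMap_eq,
      Algebra.algebraMap_eq_smul_one]
  | add p q hp hq => simp [hp, hq]
  | mul_X p i hp =>
    simp only [map_mul, LocallyConstant.mul_apply, hp, aeval_X]
    congr 1
    simp [heaviside, vertexEval, posSet]

/-- A locally constant function is constant on each region, since regions are convex. -/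
lemma apply_eq_of_posSet_eq (ω : Fin n → V →ᵃ[ℝ] ℝ) (f : LocallyConstant (M₁ ω) ℚ) (v w : M₁ ω)
    (h : posSet ω v = posSet ω w) : f v = f w := by
  let D : Set V := ⋂ i, if i ∈ posSet ω w then Hplus ω i else Hminus ω i
  have hconv : Convex ℝ D := by
    refine convex_iInter fun i => ?_
    split_ifs
    · exact (convex_Ioi (0 : ℝ)).affine_preimage (ω i)
    · exact (convex_Iio (0 : ℝ)).affine_preimage (ω i)
  have hsub : D ⊆ M₁ ω := by
    intro x hx i
    have := mem_iInter.1 hx i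
    split_ifs at this
    · exact ne_of_gt this
    · exact ne_of_lt this
  have hD : ∀ x : M₁ ω, posSet ω x = posSet ω w → x.1 ∈ D := by
    intro x hx
    refine mem_iInter.2 fun i => ?_
    rw [← hx]
    split_ifs with hi
    · exact (Finset.mem_filter.1 hi).2
    · refine lt_of_le_of_ne (not_lt.1 fun hlt => hi ?_) (x.2 i)
      exact Finset.mem_filter.2 ⟨Finset.mem_univ _, hlt⟩
  have hpre : IsPreconnected ((↑) ⁻¹' D : Set (M₁ ω)) := by
    rw [← Topology.IsInducing.subtypeVal.isPreconnected_image, Subtype.image_preimage_coe,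
      inter_eq_right.2 hsub]
    exact hconv.isPreconnected
  exact f.apply_eq_of_isPreconnected hpre (hD v h) (hD w rfl)

lemma aeval_heaviside_surjective (ω : Fin n → V →ᵃ[ℝ] ℝ) :
    Function.Surjective (MvPolynomial.aeval (R := ℚ) (heaviside ω)) := by
  classical
  intro f
  let c : Finset (Fin n) → ℚ := fun T =>
    if h : ∃ v : M₁ ω, posSet ω v = T then f h.choose else 0
  have hc : ∀ v : M₁ ω, c (posSet ω v) = f v := fun v => by
    have h : ∃ w : M₁ ω, posSet ω w = posSet ω v := ⟨v, rfl⟩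
    simp only [c, dif_pos h]
    exact apply_eq_of_posSet_eq ω f _ _ h.choose_spec
  refine ⟨∑ T, C (c T) * signIdem T, ?_⟩
  ext v
  rw [aeval_heaviside_apply, map_sum]
  simp only [map_mul, vertexEval_signIdem]
  simp [vertexEval, hc]

/-- If the hyperplanes of `S⁺ ∪ S⁻` meet in a point `x`, the reflection `v ↦ 2x - v` exchanges
the two opposite intersections of half-spaces. -/
lemma opposite_inter_eq_empty {ω : Fin n → V →ᵃ[ℝ] ℝ} {Sp Sm : Finset (Fin n)}
    (he : (⋂ i ∈ Sp, Hplus ω i) ∩ (⋂ j ∈ Sm, Hminus ω j) = ∅)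
    (hne : (⋂ i ∈ (Sp ∪ Sm : Finset (Fin n)), Hyp ω i) ≠ ∅) :
    (⋂ i ∈ Sm, Hplus ω i) ∩ (⋂ j ∈ Sp, Hminus ω j) = ∅ := by
  obtain ⟨x, hx⟩ := nonempty_iff_ne_empty.2 hne
  simp only [mem_iInter, Finset.mem_union] at hx
  rw [eq_empty_iff_forall_notMem]
  rintro v ⟨hp, hm⟩
  simp only [mem_iInter] at hp hm
  have hrefl : ∀ i, (i ∈ Sp ∨ i ∈ Sm) → ω i (AffineMap.lineMap v x (2 : ℝ)) = - ω i v := by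
    intro i hi
    have h0 : ω i x = 0 := hx i hi
    rw [AffineMap.apply_lineMap, h0, AffineMap.lineMap_apply]
    simp
    ring
  have : AffineMap.lineMap v x (2 : ℝ) ∈ (⋂ i ∈ Sp, Hplus ω i) ∩ (⋂ j ∈ Sm, Hminus ω j) := by
    refine ⟨mem_iInter₂.2 fun i hi => ?_, mem_iInter₂.2 fun i hi => ?_⟩
    · change 0 < ω i _
      rw [hrefl i (Or.inl hi)]
      have : ω i v < 0 := hm i hi
      linarith
    · change ω i _ < 0
      rw [hrefl i (Or.inr hi)]
      have : 0 < ω i v := hp i hi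
      linarith
  rw [he] at this
  exact this

lemma vertexEval_prod_eq_zero {ω : Fin n → V →ᵃ[ℝ] ℝ} {Sp Sm : Finset (Fin n)}
    (he : (⋂ i ∈ Sp, Hplus ω i) ∩ (⋂ j ∈ Sm, Hminus ω j) = ∅) (v : M₁ ω) :
    vertexEval (posSet ω v) ((∏ i ∈ Sp, X i) * ∏ j ∈ Sm, (X j - 1)) = 0 := by
  by_contra hcon
  simp only [vertexEval, map_mul, map_prod, eval_X, map_sub, map_one, mul_eq_zero,
    Finset.prod_eq_zero_iff] at hcon
  push Not at hcon
  have : v.1 ∈ (⋂ i ∈ Sp, Hplus ω i) ∩ (⋂ j ∈ Sm, Hminus ω j) := by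
    refine ⟨mem_iInter₂.2 fun i hi => ?_, mem_iInter₂.2 fun i hi => ?_⟩
    · have := hcon.1 i hi
      change 0 < ω i v
      simpa [posSet] using this
    · have := hcon.2 i hi
      refine lt_of_le_of_ne ?_ (v.2 i)
      by_contra hlt
      simp [posSet, not_le.1 hlt] at this
  rw [he] at this
  exact this

lemma aeval_heaviside_eval_one (ω : Fin n → V →ᵃ[ℝ] ℝ)
    {p : Polynomial (MvPolynomial (Fin n) ℚ)} (hp : p ∈ tIdeal ω) :
    MvPolynomial.aeval (heaviside ω) (p.eval 1) = 0 := by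
  ext v
  rw [aeval_heaviside_apply, LocallyConstant.zero_apply]
  have hle : tIdeal ω ≤
      RingHom.ker ((vertexEval (posSet ω v)).comp (Polynomial.evalRingHom 1)) := by
    refine Ideal.span_le.2 ?_
    rintro p ((⟨i, rfl⟩ | ⟨Sp, Sm, hd, he, rfl⟩) | ⟨Sp, Sm, hd, he, hne, hq⟩)
    · rw [SetLike.mem_coe, RingHom.mem_ker]
      simp only [RingHom.comp_apply, Polynomial.coe_evalRingHom, vertexEval]
      simp [sub_eq_zero]
    · rw [SetLike.mem_coe, RingHom.mem_ker, ← vertexEval_prod_eq_zero he v]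
      simp [Polynomial.eval_prod]
    · rw [SetLike.mem_coe, RingHom.mem_ker]
      have h := congrArg (fun p => p.eval 1) hq
      simp only [Polynomial.eval_mul, Polynomial.eval_sub, Polynomial.eval_prod,
        Polynomial.eval_X, Polynomial.eval_C, one_mul] at h
      rw [RingHom.comp_apply, Polynomial.coe_evalRingHom, h, map_sub,
        vertexEval_prod_eq_zero he v, mul_comm (∏ i ∈ Sp, _),
        vertexEval_prod_eq_zero (opposite_inter_eq_empty he hne) v, sub_zero]
  exact hle hp

lemma C_mem_of_aeval_heaviside_eq_zero (ω : Fin n → V →ᵃ[ℝ] ℝ) {b : MvPolynomial (Fin n) ℚ}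
    (hb : MvPolynomial.aeval (heaviside ω) b = 0) :
    Polynomial.C b ∈ tIdeal ω ⊔ Ideal.span {Polynomial.X - Polynomial.C 1} := by
  set J := (tIdeal ω ⊔ Ideal.span {Polynomial.X - Polynomial.C 1}).comap Polynomial.C with hJdef
  have hmem : ∀ p ∈ tFam1 n ∪ tFam2 ω ∪ tFam3 ω, p.eval 1 ∈ J :=
    fun p hp => C_eval_mem (Ideal.mem_sup_left (Ideal.subset_span hp))
  have hJ : ∀ i : Fin n, (X i * (X i - 1) : MvPolynomial (Fin n) ℚ) ∈ J := fun i => by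
    simpa using hmem _ (Or.inl (Or.inl ⟨i, rfl⟩))
  have hT : ∀ T : Finset (Fin n), b * signIdem T ∈ J := by
    intro T
    have h := mul_signIdem_sub_mem hJ T b
    by_cases hT : ∃ v : M₁ ω, posSet ω v = T
    · obtain ⟨v, rfl⟩ := hT
      rw [← aeval_heaviside_apply, hb] at h
      simpa using h
    · -- the region is empty, so the idempotent itself is, up to sign, a generator
      have he : (⋂ i ∈ T, Hplus ω i) ∩ (⋂ j ∈ Finset.univ \ T, Hminus ω j) = ∅ := by
        rw [eq_empty_iff_forall_notMem]
        rintro v ⟨hp, hm⟩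
        rw [mem_iInter₂] at hp hm
        refine hT ⟨⟨v, fun i => ?_⟩, ?_⟩
        · by_cases hi : i ∈ T
          · exact ne_of_gt (hp i hi)
          · exact ne_of_lt (hm i (by simp [hi]))
        · ext i
          simp only [posSet, Finset.mem_filter, Finset.mem_univ, true_and]
          refine ⟨fun h0 => ?_, fun hi => hp i hi⟩
          by_contra hi
          exact lt_asymm h0 (hm i (by simp [hi]))
      have h1 := hmem _ (Or.inl (Or.inr ⟨T, Finset.univ \ T, Finset.disjoint_sdiff, he, rfl⟩))
      simp only [Polynomial.eval_mul, Polynomial.eval_sub, Polynomial.eval_prod,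
        Polynomial.eval_X, Polynomial.eval_C] at h1
      have h2 : signIdem T = (-1) ^ (Finset.univ \ T).card *
          ((∏ i ∈ T, X i) * ∏ j ∈ Finset.univ \ T, (X j - 1)) := by
        rw [signIdem, mul_left_comm, ← Finset.prod_const, ← Finset.prod_mul_distrib]
        simp
      rw [h2]
      exact J.mul_mem_left _ (J.mul_mem_left _ h1)
  have h := sum_mem fun T (_ : T ∈ Finset.univ) => hT T
  rw [← Finset.mul_sum, sum_signIdem, mul_one] at h
  exact h

/-- (a) Evaluation `u ↦ 0` induces a `ℚ`-algebra isomorphism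
`ℚ[e,u]/(𝓘 + ⟨u⟩) ≅ B(𝒜)`; (b) evaluation `u ↦ 1` induces a `ℚ`-algebra isomorphism
`ℚ[e,u]/(𝓘 + ⟨u - 1⟩) ≅ H⁰(M₁(𝒜))` sending `e i` to the Heaviside function `x i`. -/
theorem tIdeal_specializations (ω : Fin n → V →ᵃ[ℝ] ℝ) (hω : ∀ i, (ω i).linear ≠ 0) :
    (∃ f : (Polynomial (MvPolynomial (Fin n) ℚ) ⧸
          (tIdeal ω ⊔ Ideal.span {Polynomial.X})) ≃ₐ[ℚ]
        BAlg (Hyp ω) (Hplus ω) (Hminus ω),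
      ∀ p : Polynomial (MvPolynomial (Fin n) ℚ),
        f (Ideal.Quotient.mk _ p) =
          Ideal.Quotient.mk (bIdeal (Hyp ω) (Hplus ω) (Hminus ω)) (p.eval 0)) ∧
    (∃ g : (Polynomial (MvPolynomial (Fin n) ℚ) ⧸
          (tIdeal ω ⊔ Ideal.span {Polynomial.X - 1})) ≃ₐ[ℚ]
        LocallyConstant (M₁ ω) ℚ,
      ∀ p : Polynomial (MvPolynomial (Fin n) ℚ),
        g (Ideal.Quotient.mk _ p) = MvPolynomial.aeval (heaviside ω) (p.eval 1)) := by
  exact ⟨exists_equiv_of_eval (Ideal.Quotient.mkₐ ℚ (bIdeal (Hyp ω) (Hplus ω) (Hminus ω)))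
      (Ideal.Quotient.mkₐ_surjective ℚ _) (tIdeal ω) 0 _ (by simp)
      (fun _ hp => Ideal.Quotient.eq_zero_iff_mem.2 (eval_zero_mem_bIdeal ω hp))
      (fun _ hb => C_mem_of_mem_bIdeal ω (Ideal.Quotient.eq_zero_iff_mem.1 hb)),
    exists_equiv_of_eval (MvPolynomial.aeval (heaviside ω)) (aeval_heaviside_surjective ω)
      (tIdeal ω) 1 _ (by simp) (fun _ hp => aeval_heaviside_eval_one ω hp)
      (fun _ hb => C_mem_of_aeval_heaviside_eq_zero ω hb)⟩
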